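/- arXiv:2410.04892 — 2 statements merged into one kernel-verified Lean document; each statement's English description precedes it below -/
import Mathlib

section
/- One has e₀(Λ_τ(0)) = 1 for all τ ∈ ℍ, and for every integer k ≥ 1 the lowering operator satisfies L(e_k(Λ_τ(0))) = (π/2) · e_{k−1}(Λ_τ(0)) for all τ ∈ ℍ, where e_k(Λ_τ(0)) is viewed as a smooth function of τ = u + iv. -/
open Complex Filter
open scoped Real

noncomputable section

/-- `q = e^{2πiτ}`. -/
def qq (τ : ℂ) : ℂ := Complex.exp (2 * (π : ℂ) * Complex.I * τ)

/-- The Eisenstein series `G_{2k}(τ) = -B_{2k}/(2k) + 2 ∑_{n≥1} σ_{2k-1}(n) qⁿ`. -/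
def Gser (k : ℕ) (τ : ℂ) : ℂ :=
  -((bernoulli (2 * k) : ℚ) : ℂ) / (2 * k) +
    2 * ∑' n : ℕ, ((ArithmeticFunction.sigma (2 * k - 1)) (n + 1) : ℂ) * qq τ ^ (n + 1)

/-- The completed Eisenstein series `Ĝ₂(τ) = G₂(τ) + 1/(4πv)`. -/
def Ghat2 (τ : ℂ) : ℂ := Gser 1 τ + 1 / (4 * (π : ℂ) * (τ.im : ℂ))

/-- The right-hand side `z · exp(−Ĝ₂(τ)(2πiz)²/2 − ∑_{k≥2} G_{2k}(τ)(2πiz)^{2k}/(2k)!)`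
of the generating identity defining the `e_k(Λ_τ(0))`. -/
def genRHS (τ z : ℂ) : ℂ :=
  z * Complex.exp (-(Ghat2 τ) * (2 * (π : ℂ) * Complex.I * z) ^ 2 / 2 -
    ∑' k : ℕ, Gser (k + 2) τ * (2 * (π : ℂ) * Complex.I * z) ^ (2 * (k + 2)) /
      (Nat.factorial (2 * (k + 2)) : ℂ))

/-- The lowering operator `L = -2iv² ∂/∂τ̄`, where `∂/∂τ̄ = (1/2)(∂/∂u + i ∂/∂v)`. -/
def lowerOp (f : ℂ → ℂ) (τ : ℂ) : ℂ :=
  -2 * Complex.I * (τ.im : ℂ) ^ 2 *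
    ((1 / 2 : ℂ) * (fderiv ℝ f τ 1 + Complex.I * fderiv ℝ f τ Complex.I))

/-! Written in the variable `w = -z²`, the generating identity says that `∑ e_k wᵏ = exp P`, where
the coefficients of the power series `P` are, up to constants, `Ĝ₂` and the `G_{2k}` with `k ≥ 2`.
The lowering operator `L` is a derivation which kills holomorphic functions and sends `1 / v` to
`-1`. Only the nonholomorphic part `1 / (4πv)` of `Ĝ₂` therefore contributes to `L P`, and the
outcome is `L P = (π / 2) w`. Hence `L (exp P) = (L P) exp P = (π / 2) w exp P`, and comparing
coefficients of `wᵏ` gives `L e_k = (π / 2) e_{k-1}`. The analytic input is that `P` converges near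
`w = 0`, because `G_{2k} / (2k)!` decays geometrically in `k`. -/

open PowerSeries
open scoped Topology Nat ArithmeticFunction.sigma

/-! ### Taylor series and the exponential -/

section TaylorSeries

variable {𝕜 : Type*} [NontriviallyNormedField 𝕜] {f g : 𝕜 → 𝕜} {a : ℕ → 𝕜}

lemma hasFPowerSeriesAt_ofScalars_of_hasSum
    (h : ∀ᶠ w in 𝓝 (0 : 𝕜), HasSum (fun n => a n * w ^ n) (f w)) :
    HasFPowerSeriesAt f (.ofScalars 𝕜 a) 0 := by
  rw [hasFPowerSeriesAt_iff]
  simpa [mul_comm] using h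

lemma eventually_hasSum_nhds_of_nhdsNE (hf : ContinuousAt f 0)
    (h : ∀ᶠ w in 𝓝[≠] (0 : 𝕜), HasSum (fun n => a n * w ^ n) (f w)) :
    ∀ᶠ w in 𝓝 (0 : 𝕜), HasSum (fun n => a n * w ^ n) (f w) := by
  have hsum : ∀ᶠ w in 𝓝 (0 : 𝕜), HasSum (fun n => a n * w ^ n) (∑' n, a n * w ^ n) := by
    filter_upwards [eventually_nhdsWithin_iff.1 h] with w hw
    obtain rfl | hw0 := eq_or_ne w 0
    · exact (hasSum_single 0 fun n hn => by simp [hn]).summable.hasSum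
    · exact (hw hw0).summable.hasSum
  have htsum := (hasFPowerSeriesAt_ofScalars_of_hasSum hsum).continuousAt
  have heq := (htsum.eventuallyEq_nhds_iff_eventuallyEq_nhdsNE hf).1
    (h.mono fun w hw => hw.tsum_eq)
  filter_upwards [hsum, heq] with w hw hw' using hw' ▸ hw

lemma constantCoeff_eq_of_hasSum {P : 𝕜⟦X⟧} {s : 𝕜}
    (h : HasSum (fun n => coeff n P * 0 ^ n) s) : constantCoeff P = s := by
  simpa using (hasSum_single 0 fun n hn => by simp [hn]).unique h

/-- The Taylor series of `f` at `0` as a formal power series, used to turn identities between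
convergent power series into identities between formal ones. -/
def taylorSeries (f : 𝕜 → 𝕜) : 𝕜⟦X⟧ := .mk fun n => iteratedDeriv n f 0 / n !

lemma taylorSeries_congr (h : f =ᶠ[𝓝 0] g) : taylorSeries f = taylorSeries g := by
  simp only [taylorSeries, h.iteratedDeriv_eq]

variable [CharZero 𝕜]

lemma taylorSeries_deriv (f : 𝕜 → 𝕜) : taylorSeries (deriv f) = d⁄dX 𝕜 (taylorSeries f) := by
  ext n
  have hn := n.cast_add_one_ne_zero (R := 𝕜)
  simp only [taylorSeries, coeff_mk, coeff_derivative, ← iteratedDeriv_succ', Nat.factorial_succ,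
    Nat.cast_mul, Nat.cast_succ]
  field_simp

variable [CompleteSpace 𝕜]

lemma taylorSeries_mul (hf : AnalyticAt 𝕜 f 0) (hg : AnalyticAt 𝕜 g 0) :
    taylorSeries (f * g) = taylorSeries f * taylorSeries g := by
  ext n
  simp only [taylorSeries, coeff_mul, coeff_mk, iteratedDeriv_mul hf.contDiffAt hg.contDiffAt,
    Finset.Nat.sum_antidiagonal_eq_sum_range_succ_mk, Finset.sum_div]
  refine Finset.sum_congr rfl fun i hi => ?_
  rw [Nat.cast_choose 𝕜 (Finset.mem_range_succ_iff.1 hi)]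
  field_simp [Nat.factorial_ne_zero]

lemma taylorSeries_eq_of_hasSum {P : 𝕜⟦X⟧}
    (h : ∀ᶠ w in 𝓝 (0 : 𝕜), HasSum (fun n => coeff n P * w ^ n) (f w)) : taylorSeries f = P := by
  have hf := hasFPowerSeriesAt_ofScalars_of_hasSum h
  have huniq := hf.eq_formalMultilinearSeries hf.analyticAt.hasFPowerSeriesAt
  ext n
  simpa [taylorSeries] using congrArg (fun p => p.coeff n) huniq.symm

end TaylorSeries

lemma derivative_taylorSeries_cexp_comp {f : ℂ → ℂ} (hf : AnalyticAt ℂ f 0) :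
    d⁄dX ℂ (taylorSeries (cexp ∘ f)) = d⁄dX ℂ (taylorSeries f) * taylorSeries (cexp ∘ f) := by
  rw [← taylorSeries_deriv, ← taylorSeries_deriv, ← taylorSeries_mul hf.deriv hf.cexp]
  refine taylorSeries_congr ?_
  filter_upwards [hf.eventually_analyticAt] with w hw
  simpa [mul_comm] using! hw.differentiableAt.hasDerivAt.cexp.deriv

lemma derivative_eq_mul_of_hasSum_cexp {P Q : ℂ⟦X⟧} {f : ℂ → ℂ}
    (hP : ∀ᶠ w in 𝓝 (0 : ℂ), HasSum (fun n => coeff n P * w ^ n) (f w))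
    (hQ : ∀ᶠ w in 𝓝 (0 : ℂ), HasSum (fun n => coeff n Q * w ^ n) (cexp (f w))) :
    d⁄dX ℂ Q = d⁄dX ℂ P * Q := by
  rw [← taylorSeries_eq_of_hasSum hP, ← taylorSeries_eq_of_hasSum (f := cexp ∘ f) hQ,
    derivative_taylorSeries_cexp_comp (hasFPowerSeriesAt_ofScalars_of_hasSum hP).analyticAt]

/-! ### The lowering operator as a derivation -/

/-- `f` is real differentiable at `τ` and its image under the lowering operator takes the value `l`
there; the analogue of `HasDerivAt` for `lowerOp`. -/
def HasLowerOpAt (f : ℂ → ℂ) (l τ : ℂ) : Prop :=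
  DifferentiableAt ℝ f τ ∧ lowerOp f τ = l

namespace HasLowerOpAt

variable {f g : ℂ → ℂ} {l m τ : ℂ}

lemma congr_of_eventuallyEq (hf : HasLowerOpAt f l τ) (h : g =ᶠ[𝓝 τ] f) : HasLowerOpAt g l τ :=
  ⟨hf.1.congr_of_eventuallyEq h, by rw [← hf.2, lowerOp, lowerOp, h.fderiv_eq]⟩

lemma add (hf : HasLowerOpAt f l τ) (hg : HasLowerOpAt g m τ) :
    HasLowerOpAt (fun x => f x + g x) (l + m) τ := by
  refine ⟨hf.1.add hg.1, ?_⟩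
  rw [← hf.2, ← hg.2, lowerOp, lowerOp, lowerOp, fderiv_fun_add hf.1 hg.1]
  simp only [_root_.add_apply]
  ring

lemma sum {ι : Type*} {s : Finset ι} {f : ι → ℂ → ℂ} {l : ι → ℂ}
    (h : ∀ i ∈ s, HasLowerOpAt (f i) (l i) τ) :
    HasLowerOpAt (fun x => ∑ i ∈ s, f i x) (∑ i ∈ s, l i) τ := by
  have hd : ∀ i ∈ s, DifferentiableAt ℝ (f i) τ := fun i hi => (h i hi).1
  refine ⟨.fun_sum hd, ?_⟩
  rw [← Finset.sum_congr rfl fun i hi => (h i hi).2]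
  simp only [lowerOp, fderiv_fun_sum hd, _root_.sum_apply, Finset.mul_sum,
    ← Finset.sum_add_distrib]

lemma mul (hf : HasLowerOpAt f l τ) (hg : HasLowerOpAt g m τ) :
    HasLowerOpAt (fun x => f x * g x) (l * g τ + f τ * m) τ := by
  refine ⟨hf.1.mul hg.1, ?_⟩
  rw [← hf.2, ← hg.2, lowerOp, lowerOp, lowerOp, fderiv_fun_mul hf.1 hg.1]
  simp only [_root_.add_apply, _root_.smul_apply, smul_eq_mul]
  ring

lemma comp_of_hasDerivAt {h : ℂ → ℂ} {h' : ℂ} (hh : HasDerivAt h h' (f τ))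
    (hf : HasLowerOpAt f l τ) : HasLowerOpAt (h ∘ f) (h' * l) τ := by
  have hcomp := (hh.hasFDerivAt.restrictScalars ℝ).comp τ hf.1.hasFDerivAt
  refine ⟨hcomp.differentiableAt, ?_⟩
  rw [← hf.2, lowerOp, lowerOp, hcomp.fderiv]
  simp only [ContinuousLinearMap.comp_apply, ContinuousLinearMap.coe_restrictScalars',
    ContinuousLinearMap.toSpanSingleton_apply, smul_eq_mul]
  ring

lemma const_mul (a : ℂ) (hf : HasLowerOpAt f l τ) : HasLowerOpAt (fun x => a * f x) (a * l) τ :=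
  hf.comp_of_hasDerivAt (by simpa using (hasDerivAt_id (f τ)).const_mul a)

lemma of_differentiableAt (hf : DifferentiableAt ℂ f τ) : HasLowerOpAt f 0 τ := by
  have hid : HasLowerOpAt id 0 τ := ⟨differentiableAt_id, by simp [lowerOp]⟩
  simpa using hid.comp_of_hasDerivAt hf.hasDerivAt

section PowerSeries

variable {F G : ℂ → ℂ⟦X⟧} {A B : ℂ⟦X⟧} {n : ℕ}

lemma coeff_mul (hF : ∀ i ≤ n, HasLowerOpAt (fun x => coeff i (F x)) (coeff i A) τ)
    (hG : ∀ i ≤ n, HasLowerOpAt (fun x => coeff i (G x)) (coeff i B) τ) :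
    HasLowerOpAt (fun x => coeff n (F x * G x)) (coeff n (A * G τ + F τ * B)) τ := by
  simp only [map_add, PowerSeries.coeff_mul, ← Finset.sum_add_distrib]
  exact .sum fun ij hij => (hF _ (Finset.HasAntidiagonal.antidiagonal.fst_le hij)).mul
    (hG _ (Finset.HasAntidiagonal.antidiagonal.snd_le hij))

lemma coeff_derivative (hF : HasLowerOpAt (fun x => coeff (n + 1) (F x)) (coeff (n + 1) A) τ) :
    HasLowerOpAt (fun x => coeff n (d⁄dX ℂ (F x))) (coeff n (d⁄dX ℂ A)) τ := by
  simpa only [PowerSeries.coeff_derivative, mul_comm] using hF.const_mul ((n : ℂ) + 1)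

/-- If `G' = F' G`, that is, `G` is `exp F` up to a constant factor, then `L G` and `(L F) G` both
solve `Y' = F' Y + (L F)' G`, which determines `Y` from its constant term. -/
theorem coeff_of_derivative_eq (hG : ∀ᶠ x in 𝓝 τ, d⁄dX ℂ (G x) = d⁄dX ℂ (F x) * G x)
    (hG₀ : HasLowerOpAt (fun x => coeff 0 (G x)) (coeff 0 (A * G τ)) τ)
    (hF : ∀ i, HasLowerOpAt (fun x => coeff i (F x)) (coeff i A) τ) (n : ℕ) :
    HasLowerOpAt (fun x => coeff n (G x)) (coeff n (A * G τ)) τ := by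
  induction n using Nat.strong_induction_on with
  | _ n ih =>
  obtain _ | n := n
  · exact hG₀
  have hn := n.cast_add_one_ne_zero (R := ℂ)
  have hprod : HasLowerOpAt (fun x => coeff n (d⁄dX ℂ (F x) * G x))
      (coeff n (d⁄dX ℂ (A * G τ))) τ := by
    have hleibniz : d⁄dX ℂ (A * G τ) = d⁄dX ℂ A * G τ + d⁄dX ℂ (F τ) * (A * G τ) := by
      rw [Derivation.leibniz, hG.self_of_nhds, smul_eq_mul, smul_eq_mul]
      ring
    rw [hleibniz]
    exact coeff_mul (fun i _ => (hF (i + 1)).coeff_derivative)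
      fun i hi => ih i (Nat.lt_succ_of_le hi)
  have hcoeff (H : ℂ⟦X⟧) : coeff (n + 1) H = ((n : ℂ) + 1)⁻¹ * coeff n (d⁄dX ℂ H) := by
    rw [PowerSeries.coeff_derivative]
    field_simp
  rw [hcoeff]
  refine (hprod.const_mul _).congr_of_eventuallyEq ?_
  filter_upwards [hG] with x hx using by rw [hcoeff, hx]

end PowerSeries

end HasLowerOpAt

lemma hasLowerOpAt_im (τ : ℂ) : HasLowerOpAt (fun x => (x.im : ℂ)) ((τ.im : ℂ) ^ 2) τ := by
  have him : HasFDerivAt (𝕜 := ℝ) (fun x : ℂ => (x.im : ℂ)) (ofRealCLM.comp imCLM) τ :=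
    (ofRealCLM.comp imCLM).hasFDerivAt
  refine ⟨him.differentiableAt, ?_⟩
  rw [lowerOp, him.fderiv]
  simp only [ContinuousLinearMap.comp_apply, imCLM_apply, ofRealCLM_apply, one_im, I_im,
    ofReal_zero, ofReal_one]
  linear_combination -(τ.im : ℂ) ^ 2 * I_mul_I

lemma hasLowerOpAt_inv_im {τ : ℂ} (hτ : τ.im ≠ 0) :
    HasLowerOpAt (fun x => (x.im : ℂ)⁻¹) (-1) τ := by
  have hτ' : (τ.im : ℂ) ≠ 0 := ofReal_ne_zero.2 hτ
  simpa [hτ'] using! (hasLowerOpAt_im τ).comp_of_hasDerivAt (hasDerivAt_inv hτ')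

/-! ### Eisenstein series: holomorphy and growth in the weight -/

/-- The generating series of the divisor function `σ_m`, the nonconstant part of an Eisenstein
series of weight `m + 1` as a function of the nome `q`. -/
def divisorSeries (m : ℕ) (q : ℂ) : ℂ := ∑' n : ℕ, (σ m (n + 1) : ℂ) * q ^ (n + 1)

lemma norm_sigma_mul_pow_le (m n : ℕ) (q : ℂ) :
    ‖(σ m n : ℂ) * q ^ n‖ ≤ (n : ℝ) ^ (m + 1) * ‖q‖ ^ n := by
  rw [norm_mul, norm_pow, Complex.norm_natCast]
  gcongr
  exact_mod_cast ArithmeticFunction.sigma_le_pow_succ m n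

lemma differentiableAt_divisorSeries (m : ℕ) {q : ℂ} (hq : ‖q‖ < 1) :
    DifferentiableAt ℂ (divisorSeries m) q := by
  obtain ⟨r, hqr, hr⟩ := exists_between hq
  have hr₀ : ‖r‖ < 1 := by rwa [Real.norm_of_nonneg ((norm_nonneg q).trans hqr.le)]
  have hsum : Summable fun n : ℕ => ((n + 1 : ℕ) : ℝ) ^ (m + 1) * r ^ (n + 1) :=
    (summable_nat_add_iff (f := fun n : ℕ => (n : ℝ) ^ (m + 1) * r ^ n) 1).2
      (summable_pow_mul_geometric_of_norm_lt_one (m + 1) hr₀)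
  have hdiff : DifferentiableOn ℂ (fun w => ∑' n : ℕ, (σ m (n + 1) : ℂ) * w ^ (n + 1))
      (Metric.ball 0 r) := by
    refine differentiableOn_tsum_of_summable_norm hsum (fun n => by fun_prop) Metric.isOpen_ball
      fun n w hw => (norm_sigma_mul_pow_le m (n + 1) w).trans ?_
    have hwr : ‖w‖ ≤ r := (mem_ball_zero_iff.1 hw).le
    gcongr
  exact hdiff.differentiableAt (Metric.isOpen_ball.mem_nhds (mem_ball_zero_iff.2 hqr))

lemma pow_le_factorial_div_mul_exp (m : ℕ) {t x : ℝ} (ht : 0 < t) (hx : 0 ≤ x) :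
    x ^ m ≤ m ! / t ^ m * Real.exp (t * x) := by
  have h := Real.pow_div_factorial_le_exp (t * x) (mul_nonneg ht.le hx) m
  rw [div_le_iff₀ (by positivity), mul_pow] at h
  rw [div_mul_eq_mul_div, le_div_iff₀ (by positivity)]
  linarith

lemma norm_divisorSeries_le (m : ℕ) {q : ℂ} {t : ℝ} (ht : 0 < t) (hq : ‖q‖ * Real.exp t < 1) :
    ‖divisorSeries m q‖ ≤ (m + 1)! / t ^ (m + 1) * (1 - ‖q‖ * Real.exp t)⁻¹ := by
  have hgeom := hasSum_geometric_of_lt_one (by positivity) hq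
  refine tsum_of_norm_bounded (hgeom.mul_left _) fun n => ?_
  calc ‖(σ m (n + 1) : ℂ) * q ^ (n + 1)‖
      ≤ ((n + 1 : ℕ) : ℝ) ^ (m + 1) * ‖q‖ ^ (n + 1) := norm_sigma_mul_pow_le m (n + 1) q
    _ ≤ (m + 1)! / t ^ (m + 1) * Real.exp (t * (n + 1 : ℕ)) * ‖q‖ ^ (n + 1) := by
        gcongr
        exact pow_le_factorial_div_mul_exp (m + 1) ht (Nat.cast_nonneg _)
    _ = (m + 1)! / t ^ (m + 1) * (‖q‖ * Real.exp t) ^ (n + 1) := by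
        rw [mul_pow, ← Real.exp_nat_mul, mul_comm t]
        ring
    _ ≤ (m + 1)! / t ^ (m + 1) * (‖q‖ * Real.exp t) ^ n := by
        gcongr _ * ?_
        exact pow_le_pow_of_le_one (by positivity) hq.le n.le_succ

lemma summable_divisorSeries_mul_pow_div_factorial {q x : ℂ} (h : ‖q‖ * Real.exp ‖x‖ < 1) :
    Summable fun m : ℕ => divisorSeries m q * x ^ (m + 1) / (m + 1)! := by
  have hcont : ContinuousAt (fun t => ‖q‖ * Real.exp t) ‖x‖ := by fun_prop
  have hnear : ∀ᶠ t in 𝓝[>] ‖x‖, ‖q‖ * Real.exp t < 1 :=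
    (hcont.eventually_lt_const h).filter_mono nhdsWithin_le_nhds
  obtain ⟨t, htq, hxt : ‖x‖ < t⟩ := (hnear.and self_mem_nhdsWithin).exists
  have ht : 0 < t := (norm_nonneg x).trans_lt hxt
  have hgeom : Summable fun m : ℕ => (1 - ‖q‖ * Real.exp t)⁻¹ * (‖x‖ / t) ^ (m + 1) :=
    ((summable_nat_add_iff 1).2 (summable_geometric_of_lt_one (by positivity)
      ((div_lt_one ht).2 hxt))).mul_left _
  refine .of_norm_bounded hgeom fun m => ?_
  rw [norm_div, norm_mul, norm_pow, Complex.norm_natCast]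
  calc ‖divisorSeries m q‖ * ‖x‖ ^ (m + 1) / (m + 1)!
      ≤ (m + 1)! / t ^ (m + 1) * (1 - ‖q‖ * Real.exp t)⁻¹ * ‖x‖ ^ (m + 1) / (m + 1)! := by
        gcongr
        exact norm_divisorSeries_le m ht htq
    _ = (1 - ‖q‖ * Real.exp t)⁻¹ * (‖x‖ / t) ^ (m + 1) := by
        rw [div_pow]
        field_simp

lemma abs_bernoulli_two_mul_le {k : ℕ} (hk : k ≠ 0) :
    |(bernoulli (2 * k) : ℝ)| ≤ π ^ 2 / 3 * ((2 * k)! / (2 * π) ^ (2 * k)) := by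
  have hzeta := hasSum_zeta_nat hk
  have hle : (-1 : ℝ) ^ (k + 1) * 2 ^ (2 * k - 1) * π ^ (2 * k) * bernoulli (2 * k) / (2 * k)! ≤
      π ^ 2 / 6 := by
    refine hasSum_le (fun n => ?_) hzeta hasSum_zeta_two
    obtain rfl | hn := n.eq_zero_or_pos
    · simp [hk]
    · have hn' : (1 : ℝ) ≤ n := by exact_mod_cast hn
      gcongr
      omega
  have hpow : (2 : ℝ) ^ (2 * k) = 2 * 2 ^ (2 * k - 1) := by
    rw [← pow_succ', Nat.sub_add_cancel (by omega)]
  rw [← abs_of_nonneg (hzeta.nonneg fun n => by positivity)] at hle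
  simp only [abs_div, abs_mul, abs_pow, abs_neg, abs_one, one_pow, one_mul, abs_two, Nat.abs_cast,
    abs_of_pos Real.pi_pos] at hle
  rw [mul_pow, hpow, ← mul_div_assoc, le_div_iff₀ (by positivity)]
  rw [div_le_iff₀ (by positivity)] at hle
  linarith

lemma summable_bernoulli_mul_pow_div_factorial {x : ℂ} (hx : ‖x‖ < 2 * π) :
    Summable fun k : ℕ => ((bernoulli (2 * (k + 1)) : ℚ) : ℂ) / (2 * (k + 1 : ℕ)) *
      x ^ (2 * (k + 1)) / (2 * (k + 1))! := by
  have hratio : (‖x‖ / (2 * π)) ^ 2 < 1 :=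
    pow_lt_one₀ (by positivity) ((div_lt_one Real.two_pi_pos).2 hx) two_ne_zero
  have hgeom : Summable fun k : ℕ => π ^ 2 / 3 * ((‖x‖ / (2 * π)) ^ 2) ^ (k + 1) :=
    ((summable_nat_add_iff 1).2 (summable_geometric_of_lt_one (by positivity) hratio)).mul_left _
  refine .of_norm_bounded hgeom fun k => ?_
  have hB : ‖((bernoulli (2 * (k + 1)) : ℚ) : ℂ)‖ = |(bernoulli (2 * (k + 1)) : ℝ)| := by
    rw [← Complex.ofReal_ratCast, Complex.norm_real, Real.norm_eq_abs]
  have hden : 1 ≤ ‖(2 * (k + 1 : ℕ) : ℂ)‖ := by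
    rw [norm_mul, Complex.norm_natCast, Complex.norm_ofNat]
    push_cast
    linarith [k.cast_nonneg (α := ℝ)]
  rw [norm_div, norm_mul, norm_div, norm_pow, Complex.norm_natCast, hB]
  calc |(bernoulli (2 * (k + 1)) : ℝ)| / ‖(2 * (k + 1 : ℕ) : ℂ)‖ * ‖x‖ ^ (2 * (k + 1)) /
        (2 * (k + 1))!
      ≤ π ^ 2 / 3 * ((2 * (k + 1))! / (2 * π) ^ (2 * (k + 1))) * ‖x‖ ^ (2 * (k + 1)) /
        (2 * (k + 1))! := by
        gcongr
        exact (div_le_self (abs_nonneg _) hden).trans (abs_bernoulli_two_mul_le k.succ_ne_zero)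
    _ = π ^ 2 / 3 * ((‖x‖ / (2 * π)) ^ 2) ^ (k + 1) := by
        rw [← pow_mul, div_pow]
        field_simp

lemma norm_qq (τ : ℂ) : ‖qq τ‖ = Real.exp (-(2 * π * τ.im)) := by
  rw [qq, Complex.norm_exp]
  congr 1
  simp

lemma Gser_eq_add_divisorSeries (k : ℕ) (τ : ℂ) :
    Gser k τ = -(bernoulli (2 * k) : ℚ) / (2 * k) + 2 * divisorSeries (2 * k - 1) (qq τ) :=
  rfl

lemma differentiableAt_Gser (k : ℕ) {τ : ℂ} (hτ : 0 < τ.im) : DifferentiableAt ℂ (Gser k) τ := by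
  have hq : ‖qq τ‖ < 1 := by
    rw [norm_qq, Real.exp_lt_one_iff, neg_lt_zero]
    positivity
  have hqq : DifferentiableAt ℂ qq τ := by
    unfold qq
    fun_prop
  exact (((differentiableAt_divisorSeries (2 * k - 1) hq).comp τ hqq).const_mul 2).const_add _

lemma summable_Gser_mul_pow_div_factorial {τ x : ℂ} (hx : ‖x‖ < 2 * π)
    (hxτ : ‖x‖ < 2 * π * τ.im) :
    Summable fun k : ℕ => Gser (k + 1) τ * x ^ (2 * (k + 1)) / (2 * (k + 1))! := by
  have hq : ‖qq τ‖ * Real.exp ‖x‖ < 1 := by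
    rw [norm_qq, ← Real.exp_add, Real.exp_lt_one_iff]
    linarith
  have hodd : Function.Injective fun k : ℕ => 2 * k + 1 := fun i j hij => by
    simpa using hij
  have hdiv := ((summable_divisorSeries_mul_pow_div_factorial hq).comp_injective hodd).mul_left 2
  refine (hdiv.sub (summable_bernoulli_mul_pow_div_factorial hx)).congr fun k => ?_
  simp only [Gser_eq_add_divisorSeries, Function.comp_apply, Nat.mul_add_one, Nat.add_one_sub_one]
  ring

/-! ### The exponent of the generating function -/

/-- The exponent of `genRHS τ z` as a formal power series in `w = -z²`; this choice of variable
absorbs the signs in the definition of the `e_k`, so that `∑ e_k wᵏ` is its exponential. -/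
def genExponent (τ : ℂ) : ℂ⟦X⟧ := .mk fun
  | 0 => 0
  | 1 => -(Ghat2 τ * (2 * π) ^ 2 / 2)
  | k + 2 => -(Gser (k + 2) τ * (2 * π) ^ (2 * (k + 2)) / (2 * (k + 2))!)

lemma coeff_genExponent_add_two_mul_neg_sq_pow (τ z : ℂ) (k : ℕ) :
    coeff (k + 2) (genExponent τ) * (-z ^ 2) ^ (k + 2) =
      -(Gser (k + 2) τ * (2 * π * I * z) ^ (2 * (k + 2)) / (2 * (k + 2))!) := by
  have hsq : (2 * π * I * z) ^ (2 * (k + 2)) = (2 * π) ^ (2 * (k + 2)) * (-z ^ 2) ^ (k + 2) := by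
    rw [pow_mul, pow_mul, ← mul_pow]
    congr 1
    linear_combination (2 * π * z) ^ 2 * I_sq
  simp only [genExponent, coeff_mk]
  rw [hsq]
  ring

lemma hasLowerOpAt_Ghat2 {τ : ℂ} (hτ : 0 < τ.im) :
    HasLowerOpAt Ghat2 (-(1 / (4 * (π : ℂ)))) τ := by
  have h := (HasLowerOpAt.of_differentiableAt (differentiableAt_Gser 1 hτ)).add
    ((hasLowerOpAt_inv_im hτ.ne').const_mul (1 / (4 * (π : ℂ))))
  convert! h using 1
  · funext x
    rw [Ghat2, ← div_eq_mul_inv, div_div]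
  · ring

lemma hasLowerOpAt_coeff_genExponent {τ : ℂ} (hτ : 0 < τ.im) (n : ℕ) :
    HasLowerOpAt (fun x => coeff n (genExponent x)) (coeff n (((π : ℂ) / 2) • X)) τ := by
  obtain _ | _ | k := n
  · simpa [genExponent] using HasLowerOpAt.of_differentiableAt (differentiableAt_const (0 : ℂ))
  · have hπ : (π : ℂ) ≠ 0 := ofReal_ne_zero.2 Real.pi_ne_zero
    convert (hasLowerOpAt_Ghat2 hτ).const_mul (-((2 * π) ^ 2 / 2)) using 1
    · funext x
      simp only [genExponent, coeff_mk]
      ring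
    · simp only [zero_add, map_smul, coeff_one_X, smul_eq_mul]
      field_simp
      ring
  · have hG := differentiableAt_Gser (k + 2) hτ
    have hvalue : coeff (k + 2) (((π : ℂ) / 2) • (X : ℂ⟦X⟧)) = 0 := by simp [coeff_X]
    rw [hvalue]
    simp only [genExponent, coeff_mk]
    exact .of_differentiableAt (by fun_prop)

lemma summable_coeff_genExponent_mul_neg_sq_pow {τ z : ℂ} (hz : ‖z‖ < 1) (hzτ : ‖z‖ < τ.im) :
    Summable fun n => coeff n (genExponent τ) * (-z ^ 2) ^ n := by
  have hnorm : ‖2 * π * I * z‖ = 2 * π * ‖z‖ := by simp [abs_of_pos Real.pi_pos]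
  have hG := summable_Gser_mul_pow_div_factorial (τ := τ) (x := 2 * π * I * z)
    (by rw [hnorm]; nlinarith [Real.pi_pos]) (by rw [hnorm]; gcongr)
  refine (summable_nat_add_iff 2).1 (((summable_nat_add_iff 1).2 hG).neg.congr fun k => ?_)
  rw [coeff_genExponent_add_two_mul_neg_sq_pow]

lemma genRHS_eq_mul_cexp_tsum {τ z : ℂ} (hz : ‖z‖ < 1) (hzτ : ‖z‖ < τ.im) :
    genRHS τ z = z * cexp (∑' n, coeff n (genExponent τ) * (-z ^ 2) ^ n) := by
  rw [genRHS, ← (summable_coeff_genExponent_mul_neg_sq_pow hz hzτ).sum_add_tsum_nat_add 2]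
  simp only [coeff_genExponent_add_two_mul_neg_sq_pow, tsum_neg, ← sub_eq_add_neg]
  congr 3
  simp only [Finset.sum_range_succ, Finset.sum_range_zero, genExponent, coeff_mk]
  linear_combination (-2 * Ghat2 τ * (π * z) ^ 2) * I_sq

lemma eventually_exists_neg_sq_eq {p : ℂ → Prop} (hp : ∀ᶠ z in 𝓝 0, p z) :
    ∀ᶠ w in 𝓝 (0 : ℂ), ∃ z, -z ^ 2 = w ∧ p z := by
  obtain ⟨ε, hε, hball⟩ := Metric.eventually_nhds_iff.1 hp
  filter_upwards [Metric.ball_mem_nhds (0 : ℂ) (pow_pos hε 2)] with w hw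
  obtain ⟨z, hz⟩ := IsAlgClosed.exists_pow_nat_eq (-w) two_pos
  refine ⟨z, by rw [hz, neg_neg], hball ?_⟩
  rw [mem_ball_zero_iff, ← norm_neg, ← hz, norm_pow] at hw
  rw [dist_zero_right]
  exact lt_of_pow_lt_pow_left₀ 2 hε.le hw

section GeneratingIdentity

variable {τ : ℂ} {c : ℕ → ℂ}

lemma eventually_hasSum_genExponent (hτ : 0 < τ.im) :
    ∀ᶠ w in 𝓝 (0 : ℂ), HasSum (fun n => coeff n (genExponent τ) * w ^ n)
      (∑' n, coeff n (genExponent τ) * w ^ n) := by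
  have hsmall := (eventually_norm_sub_lt (0 : ℂ) one_pos).and (eventually_norm_sub_lt 0 hτ)
  simp only [sub_zero] at hsmall
  filter_upwards [eventually_exists_neg_sq_eq hsmall]
  rintro _ ⟨z, rfl, hz, hzτ⟩
  exact (summable_coeff_genExponent_mul_neg_sq_pow hz hzτ).hasSum

lemma eventually_hasSum_cexp_of_hasSum_genRHS (hτ : 0 < τ.im)
    (hc : ∀ᶠ z in 𝓝 0, HasSum (fun k => (-1) ^ k * c k * z ^ (2 * k + 1)) (genRHS τ z)) :
    ∀ᶠ w in 𝓝[≠] 0,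
      HasSum (fun k => c k * w ^ k) (cexp (∑' n, coeff n (genExponent τ) * w ^ n)) := by
  have hsmall := (eventually_norm_sub_lt (0 : ℂ) one_pos).and (eventually_norm_sub_lt 0 hτ)
  simp only [sub_zero] at hsmall
  filter_upwards [(eventually_exists_neg_sq_eq (hc.and hsmall)).filter_mono nhdsWithin_le_nhds,
    self_mem_nhdsWithin]
  rintro _ ⟨z, rfl, hsum, hz, hzτ⟩ hz₀
  have hz₀' : z ≠ 0 := by
    rintro rfl
    simp at hz₀
  have hdiv := hsum.mul_left z⁻¹
  rw [genRHS_eq_mul_cexp_tsum hz hzτ, inv_mul_cancel_left₀ hz₀'] at hdiv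
  refine hdiv.congr_fun fun k => ?_
  rw [neg_pow, ← pow_mul, pow_succ]
  field_simp

lemma eq_one_and_derivative_eq_of_hasSum_genRHS (hτ : 0 < τ.im)
    (hc : ∀ᶠ z in 𝓝 0, HasSum (fun k => (-1) ^ k * c k * z ^ (2 * k + 1)) (genRHS τ z)) :
    c 0 = 1 ∧ d⁄dX ℂ (.mk c) = d⁄dX ℂ (genExponent τ) * .mk c := by
  have hP := eventually_hasSum_genExponent hτ
  have hcont := (hasFPowerSeriesAt_ofScalars_of_hasSum hP).analyticAt.cexp.continuousAt
  have hQ : ∀ᶠ w in 𝓝 (0 : ℂ), HasSum (fun n => coeff n (.mk c) * w ^ n)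
      (cexp (∑' n, coeff n (genExponent τ) * w ^ n)) := by
    simpa only [coeff_mk, Function.comp_apply] using
      eventually_hasSum_nhds_of_nhdsNE hcont (eventually_hasSum_cexp_of_hasSum_genRHS hτ hc)
  refine ⟨?_, derivative_eq_mul_of_hasSum_cexp hP hQ⟩
  have hP₀ := constantCoeff_eq_of_hasSum hP.self_of_nhds
  have hQ₀ := constantCoeff_eq_of_hasSum hQ.self_of_nhds
  rw [← hP₀] at hQ₀
  simpa [genExponent, ← coeff_zero_eq_constantCoeff_apply] using hQ₀

end GeneratingIdentity

/-- `e₀(Λ_τ(0)) = 1` for all `τ ∈ ℍ`, and for every `k ≥ 1` the lowering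
operator satisfies `L(e_k(Λ_τ(0))) = (π/2)·e_{k−1}(Λ_τ(0))` on ℍ. -/
theorem ek_lowering
    (e : ℕ → ℂ → ℂ)
    (he : ∀ τ : ℂ, 0 < τ.im → ∃ ε > 0, ∀ z : ℂ, ‖z‖ < ε →
      HasSum (fun k : ℕ => (-1 : ℂ) ^ k * e k τ * z ^ (2 * k + 1)) (genRHS τ z)) :
    (∀ τ : ℂ, 0 < τ.im → e 0 τ = 1) ∧
    (∀ k : ℕ, 1 ≤ k → ∀ τ : ℂ, 0 < τ.im →
      lowerOp (e k) τ = ((π : ℂ) / 2) * e (k - 1) τ) := by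
  have hgen (τ : ℂ) (hτ : 0 < τ.im) :
      e 0 τ = 1 ∧ d⁄dX ℂ (.mk (e · τ)) = d⁄dX ℂ (genExponent τ) * .mk (e · τ) :=
    eq_one_and_derivative_eq_of_hasSum_genRHS hτ
      (Metric.eventually_nhds_iff.2 (by simpa using he τ hτ))
  refine ⟨fun τ hτ => (hgen τ hτ).1, ?_⟩
  rintro (_ | k) hk τ hτ
  · contradiction
  have hnear : ∀ᶠ x : ℂ in 𝓝 τ, 0 < x.im := continuous_im.continuousAt.eventually_const_lt hτ
  have he₀ : HasLowerOpAt (e 0) 0 τ :=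
    (HasLowerOpAt.of_differentiableAt (differentiableAt_const 1)).congr_of_eventuallyEq
      (hnear.mono fun x hx => (hgen x hx).1)
  have h := HasLowerOpAt.coeff_of_derivative_eq (hnear.mono fun x hx => (hgen x hx).2)
    (by simpa using he₀) (hasLowerOpAt_coeff_genExponent hτ) (k + 1)
  simpa [coeff_succ_X_mul] using h.2
end
end

section
/- For every τ = u + iv ∈ ℍ and every z in a sufficiently small neighborhood of 0, the modified generating function φ(z;τ) := e^{−πz²/(2v)} ∑_{k≥0} (−1)^k e_k(Λ_τ(0)) z^{2k+1} satisfies φ(z;τ) = −ϑ(z;τ)/(2π η(τ)³); in particular the left-hand side is independent of v beyond its holomorphic dependence on τ. -/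
/-!
The Gaussian factor replaces `Ĝ₂` by the holomorphic `G₂` in the generating identity, leaving
`z · exp(-∑_{k≥1} G_{2k}(τ) (2πiz)^{2k} / (2k)!)`. Split each `G_{2k}` into its constant term and
its divisor sum. The Bernoulli numbers are zeta values, hence power sums of the `1 / n²`, and
contribute the logarithm of Euler's product for `sin (πz) / (πz)`. The divisor sums are Lambert
series, and with `ζ = e^{2πiz}` they contribute the logarithm of
`(ζq; q)_∞ (ζ⁻¹q; q)_∞ / (q; q)_∞²`. The product of the two exponentials is the product formula for
`-ϑ / (2πη³)` given by Jacobi's triple product, which is the limit of its finite form for Gaussian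
binomials.
-/

open Complex Filter
open scoped Real

noncomputable section

/-- The Jacobi theta function `ϑ(z;τ) = ∑_{n∈ℤ+1/2} e^{2πin(z+1/2)} q^{n²/2}`. -/
def jacobiThetaFn (z τ : ℂ) : ℂ :=
  ∑' n : ℤ, Complex.exp (2 * (π : ℂ) * Complex.I * ((n : ℂ) + 1 / 2) * (z + 1 / 2)) *
    Complex.exp ((π : ℂ) * Complex.I * τ * ((n : ℂ) + 1 / 2) ^ 2)

/-- The Dedekind eta function `η(τ) = q^{1/24} ∏_{n≥1} (1 - qⁿ)`. -/
def dedekindEtaFn (τ : ℂ) : ℂ :=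
  Complex.exp (2 * (π : ℂ) * Complex.I * τ / 24) * ∏' n : ℕ, (1 - qq τ ^ (n + 1))

/-! ### Gaussian binomials and the finite triple product -/

/-- The Gaussian binomial coefficient `[n, m]_q`, defined by the `q`-Pascal recurrence, hence
available in any semiring. It vanishes for `n < m`. -/
def qBinom {R : Type*} [Semiring R] (q : R) : ℕ → ℕ → R
  | _, 0 => 1
  | 0, _ + 1 => 0
  | n + 1, m + 1 => qBinom q n m + q ^ (m + 1) * qBinom q n (m + 1)

/-- The finite `q`-Pochhammer symbol `(a; q)_n`. -/
def qPochhammer {R : Type*} [CommRing R] (a q : R) (n : ℕ) : R :=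
  ∏ k ∈ Finset.range n, (1 - a * q ^ k)

section Semiring

variable {R : Type*} [Semiring R] (q : R)

lemma qBinom_zero_right (n : ℕ) : qBinom q n 0 = 1 := by
  cases n <;> rfl

lemma qBinom_succ_succ (n m : ℕ) :
    qBinom q (n + 1) (m + 1) = qBinom q n m + q ^ (m + 1) * qBinom q n (m + 1) := rfl

lemma qBinom_eq_zero_of_lt {n m : ℕ} (h : n < m) : qBinom q n m = 0 := by
  induction n generalizing m with
  | zero =>
    obtain ⟨m, rfl⟩ := Nat.exists_eq_succ_of_ne_zero h.ne'
    rfl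
  | succ n ih =>
    obtain ⟨m, rfl⟩ := Nat.exists_eq_succ_of_ne_zero (Nat.ne_zero_of_lt h)
    rw [Nat.succ_eq_add_one, qBinom_succ_succ, ih (by omega), ih (by omega), mul_zero, add_zero]

end Semiring

lemma sum_qBinom_succ_mul {R : Type*} [CommSemiring R] (q : R) (N : ℕ) (f : ℕ → R) :
    ∑ i ∈ Finset.range (N + 2), qBinom q (N + 1) i * f i =
      ∑ i ∈ Finset.range (N + 1), qBinom q N i * (q ^ i * f i + f (i + 1)) := by
  have hshift : ∑ i ∈ Finset.range (N + 1), qBinom q N i * (q ^ i * f i) =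
      ∑ i ∈ Finset.range (N + 1), qBinom q N (i + 1) * (q ^ (i + 1) * f (i + 1)) + f 0 := by
    rw [Finset.sum_range_succ', Finset.sum_range_succ _ N,
      qBinom_eq_zero_of_lt q (Nat.lt_succ_self N)]
    simp only [qBinom_zero_right, pow_zero, one_mul, zero_mul, add_zero]
  simp only [mul_add, Finset.sum_add_distrib, hshift]
  rw [Finset.sum_range_succ', qBinom_zero_right, one_mul, add_right_comm, ← Finset.sum_add_distrib]
  congr 1
  exact Finset.sum_congr rfl fun i _ => by rw [qBinom_succ_succ]; ring

/-- The `q`-binomial theorem. -/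
lemma prod_one_add_mul_pow {R : Type*} [CommSemiring R] (q x : R) (N : ℕ) :
    ∏ k ∈ Finset.range N, (1 + x * q ^ k) =
      ∑ i ∈ Finset.range (N + 1), qBinom q N i * (q ^ i.choose 2 * x ^ i) := by
  induction N generalizing x with
  | zero => simp [qBinom_zero_right]
  | succ N ih =>
    have hshift : ∀ k ∈ Finset.range N, 1 + x * q ^ (k + 1) = 1 + x * q * q ^ k :=
      fun k _ => by ring
    rw [Finset.prod_range_succ', Finset.prod_congr rfl hshift, ih, sum_qBinom_succ_mul,
      Finset.sum_mul]
    refine Finset.sum_congr rfl fun i _ => ?_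
    rw [Nat.choose_succ_succ, Nat.choose_one_right]
    ring

section CommRing

variable {R : Type*} [CommRing R]

lemma qPochhammer_zero (a q : R) : qPochhammer a q 0 = 1 := Finset.prod_range_zero _

lemma qPochhammer_succ (a q : R) (n : ℕ) :
    qPochhammer a q (n + 1) = qPochhammer a q n * (1 - a * q ^ n) :=
  Finset.prod_range_succ _ _

lemma qBinom_mul_qPochhammer_mul_qPochhammer (q : R) (a b : ℕ) :
    qBinom q (a + b) a * qPochhammer q q a * qPochhammer q q b = qPochhammer q q (a + b) := by
  induction h : a + b generalizing a b with
  | zero =>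
    obtain ⟨rfl, rfl⟩ : a = 0 ∧ b = 0 := by omega
    simp only [qBinom_zero_right, qPochhammer_zero, mul_one]
  | succ N ih =>
    rcases a with _ | a
    · obtain rfl : b = N + 1 := by omega
      simp only [qBinom_zero_right, qPochhammer_zero, one_mul]
    · have ha := ih a b (by omega)
      rw [qBinom_succ_succ, qPochhammer_succ, qPochhammer_succ q q N]
      rcases b with _ | b
      · obtain rfl : N = a := by omega
        rw [qBinom_eq_zero_of_lt q (Nat.lt_succ_self N)]
        linear_combination (1 - q * q ^ N) * ha
      · have hb := ih (a + 1) b (by omega)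
        obtain rfl : N = a + (b + 1) := by omega
        rw [qPochhammer_succ] at ha hb ⊢
        linear_combination (1 - q * q ^ a) * ha + q ^ (a + 1) * (1 - q * q ^ b) * hb

lemma qPochhammer_mul_self_eq_sum (a q : R) (N : ℕ) :
    qPochhammer (a * q) q N =
      ∑ i ∈ Finset.range (N + 1), qBinom q N i * (q ^ (i + 1).choose 2 * (-a) ^ i) := by
  have hfactor : ∀ k ∈ Finset.range N, 1 - a * q * q ^ k = 1 + -a * q * q ^ k :=
    fun k _ => by ring
  rw [qPochhammer, Finset.prod_congr rfl hfactor, prod_one_add_mul_pow]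
  refine Finset.sum_congr rfl fun i _ => ?_
  rw [Nat.choose_succ_succ, Nat.choose_one_right]
  ring

end CommRing

lemma toNat_mul_add_one_ediv_two_mul_two (j : ℤ) :
    ((j * (j + 1) / 2).toNat : ℤ) * 2 = j * (j + 1) := by
  have hnonneg : 0 ≤ j * (j + 1) := by rcases le_or_gt 0 j with hj | hj <;> nlinarith
  rw [Int.toNat_of_nonneg (Int.ediv_nonneg hnonneg zero_le_two),
    Int.ediv_mul_cancel (Int.even_mul_succ_self j).two_dvd]

/-- The general term `(-ζ)^j q^{j(j+1)/2}` of the Jacobi triple product. The exponent of `q` is a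
nonnegative integer for every `j : ℤ`, so neither the division nor `Int.toNat` loses anything. -/
def tripleProductTerm {K : Type*} [Field K] (q ζ : K) (j : ℤ) : K :=
  (-ζ) ^ j * q ^ (j * (j + 1) / 2).toNat

section Field

variable {K : Type*} [Field K] (q : K) {ζ : K}

lemma tripleProductTerm_natCast (ζ : K) (n : ℕ) :
    tripleProductTerm q ζ n = q ^ (n + 1).choose 2 * (-ζ) ^ n := by
  have hexp : ((n : ℤ) * (n + 1) / 2).toNat = (n + 1).choose 2 := by
    rw [Nat.choose_two_right, Nat.add_sub_cancel, mul_comm]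
    norm_cast
  rw [tripleProductTerm, hexp, zpow_natCast, mul_comm]

/-- The recurrence `t (j + 1) = -ζ q^{j+1} t j`, multiplied by a power of `q` that makes all
exponents natural numbers. -/
lemma pow_mul_tripleProductTerm_succ (hζ : ζ ≠ 0) {j : ℤ} {n m : ℕ} (h : n + (j + 1) = m) :
    q ^ n * tripleProductTerm q ζ (j + 1) = -ζ * q ^ m * tripleProductTerm q ζ j := by
  have hexp : n + ((j + 1) * (j + 1 + 1) / 2).toNat = m + (j * (j + 1) / 2).toNat := by
    have hj := toNat_mul_add_one_ediv_two_mul_two j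
    have hj1 := toNat_mul_add_one_ediv_two_mul_two (j + 1)
    have hstep : (j + 1) * (j + 1 + 1) = j * (j + 1) + 2 * (j + 1) := by ring
    omega
  calc q ^ n * tripleProductTerm q ζ (j + 1)
      = -ζ * (-ζ) ^ j * q ^ (n + ((j + 1) * (j + 1 + 1) / 2).toNat) := by
        rw [tripleProductTerm, zpow_add_one₀ (neg_ne_zero.mpr hζ), pow_add]
        ring
    _ = -ζ * q ^ m * tripleProductTerm q ζ j := by
        rw [hexp, pow_add, tripleProductTerm]
        ring

/-- The finite Jacobi triple product. Multiplying by the factor `1 - ζ⁻¹ q^n` turns the coefficients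
`[m + n, i]` into `[m + n + 1, i]`, which is exactly the `q`-Pascal rule. -/
lemma qPochhammer_mul_qPochhammer_inv (hζ : ζ ≠ 0) (m n : ℕ) :
    qPochhammer (ζ * q) q m * qPochhammer ζ⁻¹ q n =
      ∑ i ∈ Finset.range (m + n + 1), qBinom q (m + n) i * tripleProductTerm q ζ (i - n) := by
  induction n with
  | zero =>
    simp only [qPochhammer_zero, mul_one, add_zero, Nat.cast_zero, sub_zero,
      tripleProductTerm_natCast, qPochhammer_mul_self_eq_sum]
  | succ n ih =>
    rw [qPochhammer_succ, ← mul_assoc, ih, ← add_assoc, sum_qBinom_succ_mul, Finset.sum_mul]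
    refine Finset.sum_congr rfl fun i _ => ?_
    have hrec := pow_mul_tripleProductTerm_succ q hζ
      (j := (i : ℤ) - (n + 1 : ℕ)) (n := n) (m := i) (by push_cast; ring)
    have hlow : (i : ℤ) - (n + 1 : ℕ) + 1 = i - n := by push_cast; ring
    have hhigh : ((i + 1 : ℕ) : ℤ) - (n + 1 : ℕ) = i - n := by push_cast; ring
    rw [hlow] at hrec
    rw [hhigh]
    linear_combination (-(qBinom q (m + n) i * ζ⁻¹)) * hrec +
      qBinom q (m + n) i * q ^ i * tripleProductTerm q ζ (i - (n + 1 : ℕ)) * mul_inv_cancel₀ hζ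

end Field

/-! ### Passage to the limit -/

/-- The infinite `q`-Pochhammer symbol `(a; q)_∞`; the product converges for `‖q‖ < 1`. -/
def qPochhammerInf {𝕜 : Type*} [NormedField 𝕜] (a q : 𝕜) : 𝕜 := ∏' k : ℕ, (1 - a * q ^ k)

section NormedField

variable {𝕜 : Type*} [NormedField 𝕜]

lemma one_sub_ne_zero_of_norm_lt_one {x : 𝕜} (hx : ‖x‖ < 1) : 1 - x ≠ 0 := fun h => by
  rw [← sub_eq_zero.mp h, norm_one] at hx
  exact lt_irrefl _ hx

lemma norm_mul_pow_le (a : 𝕜) {q : 𝕜} (hq : ‖q‖ ≤ 1) (k : ℕ) : ‖a * q ^ k‖ ≤ ‖a‖ := by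
  rw [norm_mul, norm_pow]
  exact mul_le_of_le_one_right (norm_nonneg a) (pow_le_one₀ (norm_nonneg q) hq)

lemma one_sub_mul_pow_ne_zero {a q : 𝕜} (ha : ‖a‖ < 1) (hq : ‖q‖ ≤ 1) (k : ℕ) :
    1 - a * q ^ k ≠ 0 :=
  one_sub_ne_zero_of_norm_lt_one ((norm_mul_pow_le a hq k).trans_lt ha)

lemma summable_norm_mul_pow (a : 𝕜) {q : 𝕜} (hq : ‖q‖ < 1) :
    Summable fun k : ℕ => ‖a * q ^ k‖ := by
  simp only [norm_mul, norm_pow]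
  exact (summable_geometric_of_lt_one (norm_nonneg q) hq).mul_left _

lemma qPochhammer_self_ne_zero {q : 𝕜} (hq : ‖q‖ < 1) (n : ℕ) : qPochhammer q q n ≠ 0 :=
  Finset.prod_ne_zero_iff.mpr fun k _ => one_sub_mul_pow_ne_zero hq hq.le k

lemma qBinom_add_eq_div {q : 𝕜} (hq : ‖q‖ < 1) (a b : ℕ) :
    qBinom q (a + b) a =
      qPochhammer q q (a + b) * ((qPochhammer q q a)⁻¹ * (qPochhammer q q b)⁻¹) := by
  rw [← qBinom_mul_qPochhammer_mul_qPochhammer]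
  field_simp [qPochhammer_self_ne_zero hq a, qPochhammer_self_ne_zero hq b]

lemma tsum_indicator_qBinom_mul (q : 𝕜) {ζ : 𝕜} (hζ : ζ ≠ 0) (n : ℕ) :
    ∑' j : ℤ, (Set.Ici (-(n : ℤ))).indicator
        (fun j => qBinom q (n + n) (n + j).toNat * tripleProductTerm q ζ j) j =
      qPochhammer (ζ * q) q n * qPochhammer ζ⁻¹ q n := by
  have hinj : Function.Injective fun i : ℕ => (i : ℤ) - n := fun i j h => by simpa using h
  rw [qPochhammer_mul_qPochhammer_inv q hζ, ← hinj.tsum_eq fun j hj => ?_]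
  · have hterm (i : ℕ) : (Set.Ici (-(n : ℤ))).indicator
        (fun j => qBinom q (n + n) (n + j).toNat * tripleProductTerm q ζ j) (i - n) =
          qBinom q (n + n) i * tripleProductTerm q ζ (i - n) := by
      rw [Set.indicator_of_mem (by rw [Set.mem_Ici]; omega), add_sub_cancel, Int.toNat_natCast]
    rw [tsum_congr hterm]
    refine tsum_eq_sum fun i hi => ?_
    rw [qBinom_eq_zero_of_lt q (by simpa using hi), zero_mul]
  · have hle : -(n : ℤ) ≤ j :=
      Set.mem_Ici.mp (Set.mem_of_indicator_ne_zero (Function.mem_support.mp hj))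
    exact ⟨(n + j).toNat, by dsimp only; omega⟩

lemma summable_norm_of_succ_eq_mul_pow {q : 𝕜} (hq : ‖q‖ < 1) {c : 𝕜} {f : ℕ → 𝕜}
    (hf : ∀ n, f (n + 1) = c * q ^ n * f n) : Summable fun n => ‖f n‖ := by
  have hlim : Tendsto (fun n : ℕ => ‖c * q ^ n‖) atTop (nhds 0) := by
    simpa only [mul_zero, norm_zero] using
      ((tendsto_pow_atTop_nhds_zero_of_norm_lt_one hq).const_mul c).norm
  refine summable_of_ratio_norm_eventually_le one_half_lt_one ?_
  filter_upwards [hlim.eventually_le_const one_half_pos] with n hn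
  rw [norm_norm, norm_norm, hf, norm_mul]
  gcongr

lemma summable_norm_tripleProductTerm {q : 𝕜} (hq : ‖q‖ < 1) {ζ : 𝕜} (hζ : ζ ≠ 0) :
    Summable fun j => ‖tripleProductTerm q ζ j‖ := by
  refine Summable.of_nat_of_neg
    (summable_norm_of_succ_eq_mul_pow hq (c := -ζ * q) fun n => ?_)
    (summable_norm_of_succ_eq_mul_pow hq (c := -ζ⁻¹) fun n => ?_)
  · have h := pow_mul_tripleProductTerm_succ q hζ (j := n) (n := 0) (m := n + 1)
      (by push_cast; ring)
    rw [pow_zero, one_mul] at h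
    rw [Nat.cast_succ, h, pow_succ']
    ring
  · have h := pow_mul_tripleProductTerm_succ q hζ (j := -((n + 1 : ℕ) : ℤ)) (n := n) (m := 0)
      (by push_cast; ring)
    rw [show -((n + 1 : ℕ) : ℤ) + 1 = -n by push_cast; ring, pow_zero, mul_one] at h
    rw [mul_assoc, h, neg_mul, neg_mul, mul_neg, neg_neg, inv_mul_cancel_left₀ hζ]

variable [CompleteSpace 𝕜] {q : 𝕜}

lemma multipliable_one_sub_mul_pow (hq : ‖q‖ < 1) (a : 𝕜) :
    Multipliable fun k : ℕ => 1 - a * q ^ k := by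
  simpa only [sub_eq_add_neg] using
    multipliable_one_add_of_summable (f := fun k => -(a * q ^ k))
      (by simpa only [norm_neg] using summable_norm_mul_pow a hq)

lemma tendsto_qPochhammer (hq : ‖q‖ < 1) (a : 𝕜) :
    Tendsto (qPochhammer a q) atTop (nhds (qPochhammerInf a q)) :=
  (multipliable_one_sub_mul_pow hq a).tendsto_prod_tprod_nat

lemma qPochhammerInf_eq_one_sub_mul (hq : ‖q‖ < 1) (a : 𝕜) :
    qPochhammerInf a q = (1 - a) * qPochhammerInf (a * q) q := by
  have hshift (k : ℕ) : 1 - a * q ^ (k + 1) = 1 - a * q * q ^ k := by ring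
  have hmult : Multipliable fun k : ℕ => 1 - a * q ^ (k + 1) :=
    (multipliable_one_sub_mul_pow hq (a * q)).congr fun k => (hshift k).symm
  rw [qPochhammerInf, tprod_eq_zero_mul' (f := fun k => 1 - a * q ^ k) hmult, pow_zero, mul_one,
    tprod_congr hshift, qPochhammerInf]

lemma qPochhammerInf_self_ne_zero (hq : ‖q‖ < 1) : qPochhammerInf q q ≠ 0 := by
  simp only [qPochhammerInf, sub_eq_add_neg]
  refine tprod_one_add_ne_zero_of_summable (fun k => ?_)
    (by simpa only [norm_neg] using summable_norm_mul_pow q hq)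
  rw [← sub_eq_add_neg]
  exact one_sub_mul_pow_ne_zero hq hq.le k

lemma tendsto_inv_qPochhammer_self (hq : ‖q‖ < 1) :
    Tendsto (fun n => (qPochhammer q q n)⁻¹) atTop (nhds (qPochhammerInf q q)⁻¹) :=
  (tendsto_qPochhammer hq q).inv₀ (qPochhammerInf_self_ne_zero hq)

lemma tendsto_qBinom_add (hq : ‖q‖ < 1) {ι : Type*} {l : Filter ι} {a b : ι → ℕ}
    (ha : Tendsto a l atTop) (hb : Tendsto b l atTop) :
    Tendsto (fun i => qBinom q (a i + b i) (a i)) l (nhds (qPochhammerInf q q)⁻¹) := by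
  have hinv := tendsto_inv_qPochhammer_self hq
  have hab : Tendsto (fun i => a i + b i) l atTop :=
    tendsto_atTop_mono (fun i => Nat.le_add_right (a i) (b i)) ha
  have h := ((tendsto_qPochhammer hq q).comp hab).mul ((hinv.comp ha).mul (hinv.comp hb))
  rw [mul_inv_cancel_left₀ (qPochhammerInf_self_ne_zero hq)] at h
  exact h.congr fun i => (qBinom_add_eq_div hq (a i) (b i)).symm

lemma exists_norm_qBinom_le (hq : ‖q‖ < 1) : ∃ C : ℝ, ∀ n m : ℕ, ‖qBinom q n m‖ ≤ C := by
  obtain ⟨C₁, hC₁⟩ :=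
    (Metric.isBounded_range_of_tendsto _ (tendsto_qPochhammer hq q)).exists_norm_le
  obtain ⟨C₂, hC₂⟩ :=
    (Metric.isBounded_range_of_tendsto _ (tendsto_inv_qPochhammer_self hq)).exists_norm_le
  rw [Set.forall_mem_range] at hC₁ hC₂
  have hC₁0 : 0 ≤ C₁ := (norm_nonneg _).trans (hC₁ 0)
  have hC₂0 : 0 ≤ C₂ := (norm_nonneg _).trans (hC₂ 0)
  refine ⟨C₁ * (C₂ * C₂), fun n m => ?_⟩
  rcases lt_or_ge n m with hnm | hmn
  · rw [qBinom_eq_zero_of_lt q hnm, norm_zero]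
    positivity
  · obtain ⟨b, rfl⟩ := Nat.exists_eq_add_of_le hmn
    rw [qBinom_add_eq_div hq, norm_mul, norm_mul]
    gcongr
    exacts [hC₁ _, hC₂ _, hC₂ _]

/-- Jacobi's triple product. The Gaussian binomials are uniformly bounded and tend to
`1 / (q; q)_∞`, so dominated convergence applies to the finite form. -/
theorem hasSum_tripleProductTerm (hq : ‖q‖ < 1) {ζ : 𝕜} (hζ : ζ ≠ 0) :
    HasSum (tripleProductTerm q ζ)
      (qPochhammerInf q q * (qPochhammerInf (ζ * q) q * qPochhammerInf ζ⁻¹ q)) := by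
  obtain ⟨C, hC⟩ := exists_norm_qBinom_le hq
  have hsum := summable_norm_tripleProductTerm hq hζ
  have hlim : Tendsto
      (fun n : ℕ => ∑' j : ℤ, (Set.Ici (-(n : ℤ))).indicator
        (fun j => qBinom q (n + n) (n + j).toNat * tripleProductTerm q ζ j) j) atTop
      (nhds (∑' j, (qPochhammerInf q q)⁻¹ * tripleProductTerm q ζ j)) := by
    refine tendsto_tsum_of_dominated_convergence (hsum.mul_left C) (fun j => ?_)
      (Eventually.of_forall fun n j => ?_)
    · have ha : Tendsto (fun n : ℕ => (n + j).toNat) atTop atTop :=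
        tendsto_atTop_mono (fun n => by omega) (tendsto_sub_atTop_nat j.natAbs)
      have hb : Tendsto (fun n : ℕ => (n - j).toNat) atTop atTop :=
        tendsto_atTop_mono (fun n => by omega) (tendsto_sub_atTop_nat j.natAbs)
      refine ((tendsto_qBinom_add hq ha hb).mul_const _).congr' ?_
      filter_upwards [eventually_ge_atTop j.natAbs] with n hn
      rw [Set.indicator_of_mem (by rw [Set.mem_Ici]; omega),
        show (n + j).toNat + (n - j).toNat = n + n by omega]
    · refine (norm_indicator_le_norm_self _ _).trans ?_
      rw [norm_mul]
      gcongr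
      exact hC _ _
  simp only [tsum_indicator_qBinom_mul q hζ] at hlim
  have h := tendsto_nhds_unique hlim
    ((tendsto_qPochhammer hq (ζ * q)).mul (tendsto_qPochhammer hq ζ⁻¹))
  rw [tsum_mul_left, inv_mul_eq_iff_eq_mul₀ (qPochhammerInf_self_ne_zero hq)] at h
  exact h ▸ hsum.of_norm.hasSum

end NormedField

/-! ### Logarithms of infinite products as power series -/

lemma hasSum_column_of_hasSum_row {α β γ : Type*} [AddCommMonoid α] [TopologicalSpace α]
    [ContinuousAdd α] [T3Space α] {f : β × γ → α} {r : β → α} {s : γ → α} (hf : Summable f)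
    (hrow : ∀ b, HasSum (fun c => f (b, c)) (r b)) (hcol : ∀ c, HasSum (fun b => f (b, c)) (s c)) :
    HasSum s (∑' b, r b) := by
  rw [(hf.hasSum.prod_fiberwise hrow).tsum_eq]
  exact ((Equiv.prodComm γ β).hasSum_iff.mpr hf.hasSum).prod_fiberwise hcol

lemma summable_pow_succ_div_succ {ι : Type*} {x : ι → ℂ} {r : ℝ} (hr : r < 1)
    (hx : Summable fun i => ‖x i‖) (hxr : ∀ i, ‖x i‖ ≤ r) :
    Summable fun p : ι × ℕ => x p.1 ^ (p.2 + 1) / ((p.2 : ℂ) + 1) := by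
  rcases isEmpty_or_nonempty ι with _ | ⟨⟨i₀⟩⟩
  · exact summable_empty
  have hr0 : 0 ≤ r := (norm_nonneg _).trans (hxr i₀)
  refine .of_norm_bounded (hx.mul_of_nonneg (summable_geometric_of_lt_one hr0 hr)
    (fun _ => norm_nonneg _) fun _ => pow_nonneg hr0 _) fun ⟨i, k⟩ => ?_
  rw [norm_div, norm_pow, pow_succ', ← Nat.cast_succ, Complex.norm_natCast]
  refine (div_le_self (by positivity) (by simp)).trans ?_
  gcongr
  exact hxr i

/-- The power sums `p k = ∑ i, x i ^ k` of a family are the coefficients of the logarithm of the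
product: `∏ i, (1 - x i) = exp (-∑_{k ≥ 1} p k / k)`. -/
lemma hasSum_powerSum_div {ι : Type*} {x : ι → ℂ} {p : ℕ → ℂ} {r : ℝ} (hr : r < 1)
    (hx : Summable fun i => ‖x i‖) (hxr : ∀ i, ‖x i‖ ≤ r)
    (hp : ∀ k, HasSum (fun i => x i ^ (k + 1)) (p k)) :
    HasSum (fun k : ℕ => p k / ((k : ℂ) + 1)) (-∑' i, log (1 - x i)) := by
  rw [← tsum_neg]
  have hrow (i : ι) : HasSum (fun k : ℕ => x i ^ (k + 1) / ((k : ℂ) + 1)) (-log (1 - x i)) :=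
    hasSum_taylorSeries_neg_log' ((hxr i).trans_lt hr)
  have hcol (k : ℕ) : HasSum (fun i => x i ^ (k + 1) / ((k : ℂ) + 1)) (p k / ((k : ℂ) + 1)) :=
    (hp k).div_const _
  exact hasSum_column_of_hasSum_row (summable_pow_succ_div_succ hr hx hxr) hrow hcol

lemma exp_tsum_log_one_sub {ι : Type*} {x : ι → ℂ} (hx : Summable x) (hx1 : ∀ i, x i ≠ 1) :
    exp (∑' i, log (1 - x i)) = ∏' i, (1 - x i) := by
  refine cexp_tsum_eq_tprod (fun i => sub_ne_zero.mpr (hx1 i).symm) ?_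
  simpa only [sub_eq_add_neg] using summable_log_one_add_of_summable hx.neg

/-! ### The sine product and Bernoulli numbers -/

lemma hasSum_sq_div_succ_sq_pow (z : ℂ) (k : ℕ) :
    HasSum (fun n : ℕ => (z ^ 2 / ((n : ℂ) + 1) ^ 2) ^ (k + 1))
      (-(((bernoulli (2 * (k + 1)) : ℚ) : ℂ) / 2 * (2 * π * I * z) ^ (2 * (k + 1)) /
        (2 * (k + 1)).factorial)) := by
  have hzeta := (hasSum_nat_add_iff' 1).mpr (hasSum_zeta_nat k.add_one_ne_zero)
  rw [Finset.sum_range_one, Nat.cast_zero, zero_pow (by positivity), div_zero, sub_zero,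
    show 2 * (k + 1) - 1 = 2 * k + 1 by omega] at hzeta
  have h := (Complex.hasSum_ofReal.mpr hzeta).mul_left (z ^ (2 * (k + 1)))
  push_cast at h
  simp only [mul_one_div, pow_mul _ 2 (k + 1), ← div_pow _ _ (k + 1)] at h ⊢
  refine Eq.subst (motive := fun a => HasSum _ a) ?_ h
  have hI : (2 * π * I * z) ^ 2 = -(2 ^ 2 * π ^ 2 * z ^ 2) := by
    linear_combination 4 * π ^ 2 * z ^ 2 * I_sq
  rw [hI, neg_pow (_ * _), mul_pow, mul_pow, ← pow_mul 2 2 (k + 1)]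
  ring

lemma norm_sq_div_succ_sq_le (z : ℂ) (n : ℕ) : ‖z ^ 2 / ((n : ℂ) + 1) ^ 2‖ ≤ ‖z‖ ^ 2 := by
  rw [norm_div, norm_pow, norm_pow, ← Nat.cast_succ, Complex.norm_natCast]
  exact div_le_self (by positivity) (one_le_pow₀ (by simp))

lemma summable_norm_sq_div_succ_sq (z : ℂ) : Summable fun n : ℕ => ‖z ^ 2 / ((n : ℂ) + 1) ^ 2‖ := by
  simpa only [Nat.cast_one] using summable_pow_div_add (z ^ 2) 2 1 one_lt_two

/-- The power sums of the `z² / n²` in Euler's sine product are the zeta values `ζ(2k)`, up to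
powers of `z`. -/
lemma hasSum_bernoulli_mul_pow_div_factorial {z : ℂ} (hz : ‖z‖ < 1) :
    HasSum (fun k : ℕ => ((bernoulli (2 * (k + 1)) : ℚ) : ℂ) / (2 * (k + 1 : ℕ)) *
        (2 * π * I * z) ^ (2 * (k + 1)) / (2 * (k + 1)).factorial)
      (∑' n : ℕ, log (1 - z ^ 2 / ((n : ℂ) + 1) ^ 2)) := by
  have h := (hasSum_powerSum_div (pow_lt_one₀ (norm_nonneg z) hz two_ne_zero)
    (summable_norm_sq_div_succ_sq z) (norm_sq_div_succ_sq_le z)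
    (hasSum_sq_div_succ_sq_pow z)).neg
  rw [neg_neg] at h
  refine h.congr_fun fun k => ?_
  push_cast
  field_simp

lemma pi_mul_exp_tsum_log_eq_sin {z : ℂ} (hz : ‖z‖ < 1) :
    π * z * exp (∑' n : ℕ, log (1 - z ^ 2 / ((n : ℂ) + 1) ^ 2)) = sin (π * z) := by
  have hsum := summable_norm_sq_div_succ_sq z
  have hne (n : ℕ) : z ^ 2 / ((n : ℂ) + 1) ^ 2 ≠ 1 := fun h => by
    have hle := norm_sq_div_succ_sq_le z n
    rw [h, norm_one] at hle
    exact hle.not_gt (pow_lt_one₀ (norm_nonneg z) hz two_ne_zero)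
  have hmult : Multipliable fun n : ℕ => 1 - z ^ 2 / ((n : ℂ) + 1) ^ 2 := by
    simpa only [sub_eq_add_neg] using
      multipliable_one_add_of_summable (by simpa only [norm_neg] using hsum)
  rw [exp_tsum_log_one_sub hsum.of_norm hne]
  exact tendsto_nhds_unique (hmult.tendsto_prod_tprod_nat.const_mul _) (tendsto_euler_sin_prod z)

/-! ### Lambert series and divisor sums -/

/-- The logarithm of `(a; q)_∞` obtained by summing the principal logarithms of the factors; for
`‖a‖, ‖q‖ < 1` these are holomorphic in `a`. -/
def logQPochhammerInf (a q : ℂ) : ℂ := ∑' k : ℕ, log (1 - a * q ^ k)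

lemma exp_logQPochhammerInf {a q : ℂ} (ha : ‖a‖ < 1) (hq : ‖q‖ < 1) :
    exp (logQPochhammerInf a q) = qPochhammerInf a q :=
  exp_tsum_log_one_sub (summable_norm_mul_pow a hq).of_norm fun k =>
    (sub_ne_zero.mp (one_sub_mul_pow_ne_zero ha hq.le k)).symm

lemma hasSum_pow_div_one_sub_pow_div {a q : ℂ} (ha : ‖a‖ < 1) (hq : ‖q‖ < 1) :
    HasSum (fun c : ℕ => a ^ (c + 1) / (1 - q ^ (c + 1)) / ((c : ℂ) + 1))
      (-logQPochhammerInf a q) := by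
  have hpow (c : ℕ) :
      HasSum (fun k : ℕ => (a * q ^ k) ^ (c + 1)) (a ^ (c + 1) / (1 - q ^ (c + 1))) := by
    have hqc : ‖q ^ (c + 1)‖ < 1 := by
      rw [norm_pow]
      exact pow_lt_one₀ (norm_nonneg q) hq c.succ_ne_zero
    simpa only [mul_pow, pow_right_comm q, div_eq_mul_inv] using
      (hasSum_geometric_of_norm_lt_one hqc).mul_left (a ^ (c + 1))
  exact hasSum_powerSum_div ha (summable_norm_mul_pow a hq) (norm_mul_pow_le a hq.le) hpow

lemma hasSum_succ_pow_mul_div_one_sub_pow {q : ℂ} (hq : ‖q‖ < 1) (m : ℕ) :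
    HasSum (fun c : ℕ => ((c : ℂ) + 1) ^ m * q ^ (c + 1) / (1 - q ^ (c + 1)))
      (∑' n : ℕ, (ArithmeticFunction.sigma m (n + 1) : ℂ) * q ^ (n + 1)) := by
  have hsum := (summable_norm_pow_mul_geometric_div_one_sub m hq).comp_injective
    (add_left_injective 1)
  have hsigma := tsum_pow_div_one_sub_eq_tsum_sigma hq m
  rw [tsum_pnat_eq_tsum_succ (f := fun n => (n : ℂ) ^ m * q ^ n / (1 - q ^ n)),
    tsum_pnat_eq_tsum_succ (f := fun n => (ArithmeticFunction.sigma m n : ℂ) * q ^ n)] at hsigma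
  rw [← hsigma]
  simpa only [Function.comp_def, Nat.cast_succ] using hsum.hasSum

lemma hasSum_two_mul_pow_div_factorial (x : ℂ) :
    HasSum (fun k : ℕ => 2 * x ^ (2 * (k + 1)) / (2 * (k + 1)).factorial)
      (exp x + exp (-x) - 2) := by
  have h := ((hasSum_nat_add_iff' 1).mpr (Complex.hasSum_cosh x)).mul_left 2
  simp only [Finset.sum_range_one, mul_zero, pow_zero, Nat.factorial_zero, Nat.cast_one, div_one,
    mul_sub, two_cosh, mul_one, ← mul_div_assoc] at h
  exact h

lemma summable_norm_two_mul_pow_div_factorial (x : ℂ) :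
    Summable fun k : ℕ => ‖2 * x ^ (2 * (k + 1)) / ((2 * (k + 1)).factorial : ℂ)‖ :=
  (hasSum_two_mul_pow_div_factorial x).summable.norm

lemma tsum_norm_two_mul_pow_div_factorial_le (x : ℂ) :
    ∑' k : ℕ, ‖2 * x ^ (2 * (k + 1)) / ((2 * (k + 1)).factorial : ℂ)‖ ≤ Real.exp ‖x‖ := by
  have h := ((hasSum_nat_add_iff' 1).mpr (Real.hasSum_cosh ‖x‖)).mul_left 2
  have hterm (k : ℕ) : ‖2 * x ^ (2 * (k + 1)) / ((2 * (k + 1)).factorial : ℂ)‖ =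
      2 * (‖x‖ ^ (2 * (k + 1)) / (2 * (k + 1)).factorial) := by
    rw [norm_div, norm_mul, norm_pow, Complex.norm_natCast, Complex.norm_ofNat, mul_div_assoc]
  have hexp : Real.exp (-‖x‖) ≤ 1 := Real.exp_le_one_iff.mpr (neg_nonpos.mpr (norm_nonneg x))
  rw [tsum_congr hterm, h.tsum_eq, Finset.sum_range_one, mul_zero, pow_zero, Nat.factorial_zero,
    Nat.cast_one, div_one, Real.cosh_eq]
  linarith

/-- The term `2 (cw)^{2k} / (2k)! · q^c / (c (1 - q^c))` with `(c, k) = (p.1 + 1, p.2 + 1)`. Summing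
over `k` gives Lambert series for logarithms of products, summing over `c` gives divisor sums. -/
def lambertTerm (q w : ℂ) (p : ℕ × ℕ) : ℂ :=
  2 * (((p.1 : ℂ) + 1) * w) ^ (2 * (p.2 + 1)) / (2 * (p.2 + 1)).factorial *
    (q ^ (p.1 + 1) / (1 - q ^ (p.1 + 1)) / ((p.1 : ℂ) + 1))

lemma one_sub_norm_le_norm_one_sub_pow {q : ℂ} (hq : ‖q‖ ≤ 1) (c : ℕ) :
    1 - ‖q‖ ≤ ‖1 - q ^ (c + 1)‖ := by
  have hpow : ‖q ^ (c + 1)‖ ≤ ‖q‖ := by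
    rw [norm_pow]
    exact pow_le_of_le_one (norm_nonneg q) hq c.succ_ne_zero
  have htri := norm_sub_norm_le 1 (q ^ (c + 1))
  rw [norm_one] at htri
  linarith

lemma norm_pow_div_one_sub_pow_div_le {q : ℂ} (hq : ‖q‖ < 1) (c : ℕ) :
    ‖q ^ (c + 1) / (1 - q ^ (c + 1)) / ((c : ℂ) + 1)‖ ≤ ‖q‖ ^ (c + 1) / (1 - ‖q‖) := by
  rw [norm_div, norm_div, norm_pow, ← Nat.cast_succ, Complex.norm_natCast]
  refine (div_le_self (by positivity) (by simp)).trans ?_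
  exact div_le_div_of_nonneg_left (by positivity) (sub_pos.mpr hq)
    (one_sub_norm_le_norm_one_sub_pow hq.le c)

section Lambert

variable {q w : ℂ}

lemma summable_lambertTerm (hq : ‖q‖ < 1) (hw : ‖q‖ * Real.exp ‖w‖ < 1) :
    Summable (lambertTerm q w) := by
  have hnorm (c k : ℕ) : ‖lambertTerm q w (c, k)‖ =
      ‖2 * (((c : ℂ) + 1) * w) ^ (2 * (k + 1)) / ((2 * (k + 1)).factorial : ℂ)‖ *
        ‖q ^ (c + 1) / (1 - q ^ (c + 1)) / ((c : ℂ) + 1)‖ := norm_mul _ _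
  have hgeom : Summable fun c : ℕ => (‖q‖ * Real.exp ‖w‖) ^ (c + 1) / (1 - ‖q‖) :=
    ((summable_nat_add_iff 1).mpr (summable_geometric_of_lt_one (by positivity) hw)).div_const _
  refine Summable.of_norm ((summable_prod_of_nonneg fun _ => norm_nonneg _).mpr
    ⟨fun c => ?_, hgeom.of_nonneg_of_le (fun c => tsum_nonneg fun _ => norm_nonneg _)
      fun c => ?_⟩)
  · simp only [hnorm]
    exact (summable_norm_two_mul_pow_div_factorial _).mul_right _
  · simp only [hnorm]
    have hexp : Real.exp ‖((c : ℂ) + 1) * w‖ = Real.exp ‖w‖ ^ (c + 1) := by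
      rw [norm_mul, ← Nat.cast_succ, Complex.norm_natCast, Real.exp_nat_mul]
    calc _ = (∑' k : ℕ, ‖2 * (((c : ℂ) + 1) * w) ^ (2 * (k + 1)) /
            ((2 * (k + 1)).factorial : ℂ)‖) *
          ‖q ^ (c + 1) / (1 - q ^ (c + 1)) / ((c : ℂ) + 1)‖ := tsum_mul_right
      _ ≤ Real.exp ‖((c : ℂ) + 1) * w‖ * (‖q‖ ^ (c + 1) / (1 - ‖q‖)) := by
          gcongr
          · exact tsum_norm_two_mul_pow_div_factorial_le _
          · exact norm_pow_div_one_sub_pow_div_le hq c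
      _ = (‖q‖ * Real.exp ‖w‖) ^ (c + 1) / (1 - ‖q‖) := by
          rw [hexp]
          ring

lemma norm_exp_mul_lt_one (hw : ‖q‖ * Real.exp ‖w‖ < 1) : ‖exp w * q‖ < 1 := by
  rw [mul_comm, norm_mul]
  exact (mul_le_mul_of_nonneg_left (norm_exp_le_exp_norm w) (norm_nonneg q)).trans_lt hw

lemma hasSum_lambertTerm_column (hq : ‖q‖ < 1) (w : ℂ) (k : ℕ) :
    HasSum (fun c => lambertTerm q w (c, k))
      (2 * (∑' n : ℕ, (ArithmeticFunction.sigma (2 * k + 1) (n + 1) : ℂ) * q ^ (n + 1)) *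
        w ^ (2 * (k + 1)) / (2 * (k + 1)).factorial) := by
  have h := (hasSum_succ_pow_mul_div_one_sub_pow hq (2 * k + 1)).mul_left
    (2 * w ^ (2 * (k + 1)) / (2 * (k + 1)).factorial)
  refine Eq.subst (motive := fun a => HasSum _ a) (by ring) (h.congr_fun fun c => ?_)
  have hc : (c : ℂ) + 1 ≠ 0 := Nat.cast_add_one_ne_zero c
  rw [lambertTerm, mul_pow, show 2 * (k + 1) = 2 * k + 1 + 1 by ring, pow_succ (_ + 1) (2 * k + 1)]
  field_simp

lemma hasSum_exp_add_exp_sub_two_mul (hq : ‖q‖ < 1) (hw : ‖q‖ * Real.exp ‖w‖ < 1) :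
    HasSum (fun c : ℕ => (exp (((c : ℂ) + 1) * w) + exp (-(((c : ℂ) + 1) * w)) - 2) *
        (q ^ (c + 1) / (1 - q ^ (c + 1)) / ((c : ℂ) + 1)))
      (2 * logQPochhammerInf q q - logQPochhammerInf (exp w * q) q -
        logQPochhammerInf (exp (-w) * q) q) := by
  have hpos := hasSum_pow_div_one_sub_pow_div (norm_exp_mul_lt_one hw) hq
  have hneg := hasSum_pow_div_one_sub_pow_div
    (norm_exp_mul_lt_one (q := q) (w := -w) (by rwa [norm_neg])) hq
  have hzero := (hasSum_pow_div_one_sub_pow_div hq hq).mul_left 2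
  refine Eq.subst (motive := fun a => HasSum _ a) (by ring)
    (((hpos.add hneg).sub hzero).congr_fun fun c => ?_)
  rw [mul_pow, mul_pow, ← exp_nat_mul, ← exp_nat_mul, Nat.cast_succ, mul_neg]
  ring

lemma hasSum_tsum_sigma_mul_pow_div_factorial (hq : ‖q‖ < 1) (hw : ‖q‖ * Real.exp ‖w‖ < 1) :
    HasSum (fun k : ℕ =>
        2 * (∑' n : ℕ, (ArithmeticFunction.sigma (2 * k + 1) (n + 1) : ℂ) * q ^ (n + 1)) *
          w ^ (2 * (k + 1)) / (2 * (k + 1)).factorial)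
      (2 * logQPochhammerInf q q - logQPochhammerInf (exp w * q) q -
        logQPochhammerInf (exp (-w) * q) q) := by
  have hrow (c : ℕ) : HasSum (fun k => lambertTerm q w (c, k))
      ((exp (((c : ℂ) + 1) * w) + exp (-(((c : ℂ) + 1) * w)) - 2) *
        (q ^ (c + 1) / (1 - q ^ (c + 1)) / ((c : ℂ) + 1))) := by
    simp only [lambertTerm]
    exact (hasSum_two_mul_pow_div_factorial _).mul_right _
  rw [← (hasSum_exp_add_exp_sub_two_mul hq hw).tsum_eq]
  have hcol := hasSum_lambertTerm_column hq w
  exact hasSum_column_of_hasSum_row (summable_lambertTerm hq hw) hrow hcol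

end Lambert

/-! ### Theta, eta and the generating function -/

lemma norm_qq_lt_one {τ : ℂ} (hτ : 0 < τ.im) : ‖qq τ‖ < 1 := by
  have hre : (2 * (π : ℂ) * I * τ).re = -(2 * π * τ.im) := by simp
  rw [qq, norm_exp, hre, Real.exp_lt_one_iff, neg_lt_zero]
  positivity

lemma tripleProductTerm_qq_exp (τ w : ℂ) (n : ℤ) :
    tripleProductTerm (qq τ) (exp w) n =
      exp (n * (w + π * I)) * exp (π * I * τ * (n * (n + 1))) := by
  have hexp : ((n * (n + 1) / 2).toNat : ℂ) * 2 = n * (n + 1) := by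
    exact_mod_cast toNat_mul_add_one_ediv_two_mul_two n
  rw [tripleProductTerm, ← neg_one_mul, ← exp_pi_mul_I, ← exp_add, ← exp_int_mul, qq,
    ← exp_nat_mul, ← hexp]
  congr 2 <;> ring

lemma jacobiThetaFn_term_eq (z τ : ℂ) (n : ℤ) :
    exp (2 * π * I * ((n : ℂ) + 1 / 2) * (z + 1 / 2)) *
        exp (π * I * τ * ((n : ℂ) + 1 / 2) ^ 2) =
      I * exp (π * I * z) * exp (2 * π * I * τ / 8) *
        tripleProductTerm (qq τ) (exp (2 * π * I * z)) n := by
  have hI : I = exp (π / 2 * I) := exp_pi_div_two_mul_I.symm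
  rw [tripleProductTerm_qq_exp]
  nth_rewrite 3 [hI]
  simp only [← exp_add]
  congr 1
  ring

lemma I_mul_exp_mul_one_sub_exp_neg (z : ℂ) :
    I * exp (π * I * z) * (1 - exp (-(2 * π * I * z))) = -2 * sin (π * z) := by
  rw [mul_sub, mul_one, mul_assoc I, ← exp_add, sin,
    show (π : ℂ) * I * z + -(2 * π * I * z) = -(π * z) * I by ring,
    show (π : ℂ) * I * z = π * z * I by ring]
  ring

lemma jacobiThetaFn_eq_mul_qPochhammerInf (z : ℂ) {τ : ℂ} (hτ : 0 < τ.im) :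
    jacobiThetaFn z τ = -2 * sin (π * z) * exp (2 * π * I * τ / 8) *
      (qPochhammerInf (qq τ) (qq τ) *
        (qPochhammerInf (exp (2 * π * I * z) * qq τ) (qq τ) *
          qPochhammerInf (exp (-(2 * π * I * z)) * qq τ) (qq τ))) := by
  have hq := norm_qq_lt_one hτ
  rw [jacobiThetaFn, tsum_congr (jacobiThetaFn_term_eq z τ), tsum_mul_left,
    (hasSum_tripleProductTerm hq (exp_ne_zero _)).tsum_eq, ← exp_neg,
    qPochhammerInf_eq_one_sub_mul hq (exp (-_)), ← I_mul_exp_mul_one_sub_exp_neg]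
  ring

lemma dedekindEtaFn_pow_three (τ : ℂ) :
    dedekindEtaFn τ ^ 3 = exp (2 * π * I * τ / 8) * qPochhammerInf (qq τ) (qq τ) ^ 3 := by
  simp only [dedekindEtaFn, qPochhammerInf, ← pow_succ', mul_pow, ← exp_nat_mul]
  congr 2
  push_cast
  ring

/-- The Gaussian factor cancels the nonholomorphic part of `Ĝ₂`. -/
lemma exp_mul_genRHS_eq {τ z A : ℂ} (hτ : τ.im ≠ 0)
    (hA : HasSum (fun k : ℕ => Gser (k + 1) τ * (2 * π * I * z) ^ (2 * (k + 1)) /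
      (2 * (k + 1)).factorial) A) :
    exp (-π * z ^ 2 / (2 * τ.im)) * genRHS τ z = z * exp (-A) := by
  have htail := ((hasSum_nat_add_iff' 1).mpr hA).tsum_eq
  simp only [Finset.sum_range_one, add_assoc, Nat.reduceAdd, zero_add, mul_one,
    Nat.factorial_two, Nat.cast_ofNat] at htail
  have hv : (τ.im : ℂ) ≠ 0 := ofReal_ne_zero.mpr hτ
  have hπ : (π : ℂ) ≠ 0 := ofReal_ne_zero.mpr Real.pi_ne_zero
  have hcancel : 1 / (4 * π * τ.im) * (2 * π * I * z) ^ 2 / 2 = -π * z ^ 2 / (2 * τ.im) := by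
    rw [show (2 * π * I * z) ^ 2 = -(4 * π ^ 2 * z ^ 2) by
      linear_combination 4 * π ^ 2 * z ^ 2 * I_sq]
    field_simp
  rw [genRHS, htail, Ghat2, mul_left_comm, ← exp_add, ← hcancel]
  congr 2
  ring

lemma hasSum_Gser_mul_pow_div_factorial {τ z : ℂ} (hτ : 0 < τ.im) (hz : ‖z‖ < 1)
    (hw : ‖qq τ‖ * Real.exp ‖2 * π * I * z‖ < 1) :
    HasSum (fun k : ℕ => Gser (k + 1) τ * (2 * π * I * z) ^ (2 * (k + 1)) /
        (2 * (k + 1)).factorial)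
      (2 * logQPochhammerInf (qq τ) (qq τ) -
          logQPochhammerInf (exp (2 * π * I * z) * qq τ) (qq τ) -
          logQPochhammerInf (exp (-(2 * π * I * z)) * qq τ) (qq τ) -
        ∑' n : ℕ, log (1 - z ^ 2 / ((n : ℂ) + 1) ^ 2)) := by
  have hsigma := hasSum_tsum_sigma_mul_pow_div_factorial (norm_qq_lt_one hτ) hw
  refine (hsigma.sub (hasSum_bernoulli_mul_pow_div_factorial hz)).congr_fun fun k => ?_
  rw [Gser, show 2 * (k + 1) - 1 = 2 * k + 1 by omega]
  ring

lemma exp_mul_genRHS_eq_theta_div_eta {τ z : ℂ} (hτ : 0 < τ.im) (hz : ‖z‖ < 1)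
    (hw : ‖qq τ‖ * Real.exp ‖2 * π * I * z‖ < 1) :
    exp (-π * z ^ 2 / (2 * τ.im)) * genRHS τ z =
      -jacobiThetaFn z τ / (2 * π * dedekindEtaFn τ ^ 3) := by
  have hq := norm_qq_lt_one hτ
  have hneg : ‖exp (-(2 * π * I * z)) * qq τ‖ < 1 := norm_exp_mul_lt_one (by rwa [norm_neg])
  have hπ : (π : ℂ) ≠ 0 := ofReal_ne_zero.mpr Real.pi_ne_zero
  have he := exp_ne_zero (2 * π * I * τ / 8)
  rw [exp_mul_genRHS_eq hτ.ne' (hasSum_Gser_mul_pow_div_factorial hτ hz hw),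
    jacobiThetaFn_eq_mul_qPochhammerInf z hτ, dedekindEtaFn_pow_three,
    ← pi_mul_exp_tsum_log_eq_sin hz, ← exp_logQPochhammerInf hneg hq,
    ← exp_logQPochhammerInf (norm_exp_mul_lt_one hw) hq, ← exp_logQPochhammerInf hq hq]
  simp only [neg_sub, exp_sub, two_mul (logQPochhammerInf _ _), exp_add]
  field_simp

lemma eventually_exp_mul_genRHS_eq {τ : ℂ} (hτ : 0 < τ.im) :
    ∀ᶠ z in nhds (0 : ℂ), exp (-π * z ^ 2 / (2 * τ.im)) * genRHS τ z =
      -jacobiThetaFn z τ / (2 * π * dedekindEtaFn τ ^ 3) := by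
  have hnorm : ContinuousAt (fun z : ℂ => ‖z‖) 0 := by fun_prop
  have hexp : ContinuousAt (fun z : ℂ => ‖qq τ‖ * Real.exp ‖2 * π * I * z‖) 0 := by fun_prop
  filter_upwards [hnorm.eventually_lt_const (u := 1) (by simp),
    hexp.eventually_lt_const (u := 1) (by simpa using norm_qq_lt_one hτ)] with z hz hw
  exact exp_mul_genRHS_eq_theta_div_eta hτ hz hw

/-- For every `τ = u+iv ∈ ℍ` and every `z` in a sufficiently small
neighborhood of `0`, the modified generating function
`φ(z;τ) = e^{−πz²/(2v)} ∑_{k≥0} (−1)^k e_k(Λ_τ(0)) z^{2k+1}` equals `−ϑ(z;τ)/(2πη(τ)³)`. -/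
theorem modified_generating_function_eq_theta_over_eta
    (e : ℕ → ℂ → ℂ)
    (he : ∀ τ : ℂ, 0 < τ.im → ∃ ε > 0, ∀ z : ℂ, ‖z‖ < ε →
      HasSum (fun k : ℕ => (-1 : ℂ) ^ k * e k τ * z ^ (2 * k + 1)) (genRHS τ z))
    (τ : ℂ) (hτ : 0 < τ.im) :
    ∃ ε > 0, ∀ z : ℂ, ‖z‖ < ε →
      HasSum (fun k : ℕ =>
          Complex.exp (-(π : ℂ) * z ^ 2 / (2 * (τ.im : ℂ))) *
            ((-1 : ℂ) ^ k * e k τ * z ^ (2 * k + 1)))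
        (-jacobiThetaFn z τ / (2 * (π : ℂ) * dedekindEtaFn τ ^ 3)) := by
  obtain ⟨ε, hε, h⟩ := he τ hτ
  obtain ⟨δ, hδ, htheta⟩ := Metric.eventually_nhds_iff.mp (eventually_exp_mul_genRHS_eq hτ)
  refine ⟨min ε δ, lt_min hε hδ, fun z hz => ?_⟩
  rw [lt_min_iff] at hz
  rw [← htheta (by rw [dist_zero_right]; exact hz.2)]
  exact (h z hz.1).mul_left _
end
end
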